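/- There exists ε₀ > 0 such that for every ε with 0 < ε < ε₀ the following holds in the ε-instance: if X' = (X'_1, X'_2, X'_3) is a complete EFX allocation with X'_3 ∩ {g_5, g_6, g_7} = {g_6} and the goods g_3 and g_5 are allocated one to agent 1 and one to agent 2 (i.e., either g_3 ∈ X'_1 and g_5 ∈ X'_2, or g_3 ∈ X'_2 and g_5 ∈ X'_1), then v_1(X'_1)·v_2(X'_2)·v_3(X'_3) < (10 + 2ε^5)·(10 + ε)·10. -/

import Mathlib

open Finset

/-- Additive value of a bundle `S` under per-good valuation `v`. -/
noncomputable def val {G : Type*} (v : G → ℝ) (S : Finset G) : ℝ := ∑ g ∈ S, v g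

/-- `X` is EFX: no agent `i` strongly envies agent `j`, i.e. for every good `g`
in `X j`, `v_i(X_i) ≥ v_i(X_j \ {g})`. -/
def EFX {G : Type*} [DecidableEq G] (v : Fin 3 → G → ℝ) (X : Fin 3 → Finset G) : Prop :=
  ∀ i j : Fin 3, ∀ g ∈ X j, val (v i) (X j \ {g}) ≤ val (v i) (X i)

/-- The valuations of the ε-instance: agent `i`'s value for good `g_{k+1}` is `vE ε i k`. -/
noncomputable def vE (ε : ℝ) : Fin 3 → Fin 7 → ℝ :=
  ![![ε ^ 3 + 6 * ε ^ 5, 2 * ε ^ 5, 10 - ε ^ 3, ε ^ 3, 10 - 2 * ε ^ 3,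
      10 + 3 * ε ^ 5, ε ^ 5],
    ![ε, 0, 10 - ε ^ 2 + ε ^ 6, 2 * ε ^ 2, 10, 0, ε - ε ^ 2],
    ![0, 0, 0, 0, 10 - ε ^ 4, 10, 2 * ε ^ 4]]

/-- The partial allocation `X₁ = {g₂,g₃,g₄}`, `X₂ = {g₁,g₅}`, `X₃ = {g₆}` (goods are
`0`-indexed: good `g_{k+1}` is `k : Fin 7`). -/
def XT : Fin 3 → Finset (Fin 7) :=
  ![{1, 2, 3}, {0, 4}, {5}]

/-- Monotonicity of `val` for nonnegative valuations. -/
theorem val_le_val_of_subset {G : Type*} {v : G → ℝ} (hv : ∀ g, 0 ≤ v g) {S T : Finset G}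
    (h : S ⊆ T) : val v S ≤ val v T :=
  Finset.sum_le_sum_of_subset_of_nonneg h fun g _ _ => hv g

/-- In an EFX allocation, agent `i` values their own bundle at least as much as any part of
another bundle that misses some good of it. -/
theorem EFX.val_le_of_subset {G : Type*} [DecidableEq G] {v : Fin 3 → G → ℝ}
    {X : Fin 3 → Finset G} (hX : EFX v X) (hv : ∀ i g, 0 ≤ v i g) {i j : Fin 3} {g : G}
    (hg : g ∈ X j) {T : Finset G} (hT : T ⊆ X j) (hgT : g ∉ T) :
    val (v i) T ≤ val (v i) (X i) := by
  refine (val_le_val_of_subset (hv i) fun x hx => ?_).trans (hX i j g hg)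
  rw [Finset.mem_sdiff, Finset.mem_singleton]
  exact ⟨hT hx, fun h => hgT (h ▸ hx)⟩

theorem pow_succ_le_div_hundred {ε : ℝ} (h₀ : 0 < ε) (h₁ : ε < 1 / 100) (k : ℕ) :
    0 < ε ^ k ∧ ε ^ (k + 1) ≤ ε ^ k / 100 := by
  have h := pow_pos h₀ k
  exact ⟨h, by rw [pow_succ]; nlinarith⟩

theorem vE_nonneg {ε : ℝ} (h₀ : 0 < ε) (h₁ : ε < 1 / 100) (i : Fin 3) (g : Fin 7) :
    0 ≤ vE ε i g := by
  have p := pow_succ_le_div_hundred h₀ h₁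
  have := p 1; have := p 2; have := p 3; have := p 4; have := p 5; have := p 6
  fin_cases i <;> fin_cases g <;> simp [vE] <;> norm_num at * <;> linarith

/-- Bounding the Nash welfare product by that of larger bundles. -/
theorem prod_lt_of_subset {ε : ℝ} (h₀ : 0 < ε) (h₁ : ε < 1 / 100) {X : Fin 3 → Finset (Fin 7)}
    {S T : Finset (Fin 7)} {c : ℝ} (hS : X 0 ⊆ S) (hT : X 1 ⊆ T)
    (h₂ : val (vE ε 2) (X 2) ≤ 10) (hc : val (vE ε 0) S * val (vE ε 1) T < c) :
    val (vE ε 0) (X 0) * val (vE ε 1) (X 1) * val (vE ε 2) (X 2) < c * 10 := by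
  have hv := vE_nonneg h₀ h₁
  have nonneg : ∀ i R, 0 ≤ val (vE ε i) R := fun i R => Finset.sum_nonneg fun g _ => hv i g
  have h : val (vE ε 0) (X 0) * val (vE ε 1) (X 1) ≤ val (vE ε 0) S * val (vE ε 1) T :=
    mul_le_mul (val_le_val_of_subset (hv 0) hS) (val_le_val_of_subset (hv 1) hT)
      (nonneg 1 _) (nonneg 0 _)
  nlinarith [nonneg 2 (X 2), mul_nonneg (nonneg 0 (X 0)) (nonneg 1 (X 1))]

/-- For all sufficiently small `ε > 0`: any complete EFX allocation of the ε-instance with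
`X'₃ ∩ {g₅,g₆,g₇} = {g₆}` in which `g₃` and `g₅` go one to agent 1 and one to agent 2
has Nash-welfare product below `(10 + 2ε⁵)(10 + ε)·10`. -/
theorem eps_instance_case_only_g6_to_agent3 :
    ∃ ε₀ : ℝ, 0 < ε₀ ∧ ∀ ε : ℝ, 0 < ε → ε < ε₀ →
      ∀ X' : Fin 3 → Finset (Fin 7),
        (∀ i j, i ≠ j → Disjoint (X' i) (X' j)) →
        X' 0 ∪ X' 1 ∪ X' 2 = Finset.univ →
        EFX (vE ε) X' →
        X' 2 ∩ ({4, 5, 6} : Finset (Fin 7)) = {5} →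
        (((2 : Fin 7) ∈ X' 0 ∧ (4 : Fin 7) ∈ X' 1) ∨
          ((2 : Fin 7) ∈ X' 1 ∧ (4 : Fin 7) ∈ X' 0)) →
        val (vE ε 0) (X' 0) * val (vE ε 1) (X' 1) * val (vE ε 2) (X' 2)
          < (10 + 2 * ε ^ 5) * (10 + ε) * 10 := by
  refine ⟨1 / 100, by norm_num, fun ε h₀ h₁ X disj cover efx hX₂ h₃₅ => ?_⟩
  have hv := vE_nonneg h₀ h₁
  have pw := pow_succ_le_div_hundred h₀ h₁
  obtain ⟨p1, s1⟩ := pw 1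
  obtain ⟨p2, s2⟩ := pw 2
  obtain ⟨p3, s3⟩ := pw 3
  obtain ⟨p4, s4⟩ := pw 4
  obtain ⟨p5, s5⟩ := pw 5
  obtain ⟨p6, s6⟩ := pw 6
  obtain ⟨p7, s7⟩ := pw 7
  obtain ⟨p8, s8⟩ := pw 8
  obtain ⟨p9, s9⟩ := pw 9
  obtain ⟨p10, s10⟩ := pw 10
  obtain ⟨p11, s11⟩ := pw 11
  obtain ⟨p12, s12⟩ := pw 12
  norm_num at p1 s1 s2 s3 s4 s5 s6 s7 s8 s9 s10 s11 s12
  have hcov : ∀ k, k ∈ X 0 ∨ k ∈ X 1 ∨ k ∈ X 2 := fun k => by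
    have := Finset.mem_univ k
    rwa [← cover, Finset.mem_union, Finset.mem_union, or_assoc] at this
  have d01 : ∀ k, k ∈ X 0 → k ∉ X 1 := fun k h => Finset.disjoint_left.1 (disj 0 1 (by decide)) h
  have d02 : ∀ k, k ∈ X 0 → k ∉ X 2 := fun k h => Finset.disjoint_left.1 (disj 0 2 (by decide)) h
  have d12 : ∀ k, k ∈ X 1 → k ∉ X 2 := fun k h => Finset.disjoint_left.1 (disj 1 2 (by decide)) h
  have hmem : ∀ k ∈ ({4, 5, 6} : Finset (Fin 7)), k ∈ X 2 ↔ k = 5 := fun k hk => by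
    rw [← Finset.mem_singleton, ← hX₂, Finset.mem_inter, and_iff_left hk]
  have m5 : (5 : Fin 7) ∈ X 2 := (hmem 5 (by decide)).2 rfl
  have m6 : (6 : Fin 7) ∉ X 2 := fun h => absurd ((hmem 6 (by decide)).1 h) (by decide)
  have m4 : (4 : Fin 7) ∉ X 2 := fun h => absurd ((hmem 4 (by decide)).1 h) (by decide)
  have n0 : (5 : Fin 7) ∉ X 0 := fun h => d02 5 h m5
  have n1 : (5 : Fin 7) ∉ X 1 := fun h => d12 5 h m5
  -- a bundle is contained in `T` as soon as it misses all goods outside `T`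
  have sub : ∀ (j : Fin 3) (T : Finset (Fin 7)), (∀ k, k ∈ T ∨ k ∉ X j) → X j ⊆ T :=
    fun j T h k hk => (h k).resolve_right (not_not_intro hk)
  have m2 : (2 : Fin 7) ∉ X 2 := by
    rcases h₃₅ with ⟨h, -⟩ | ⟨h, -⟩
    exacts [d02 2 h, d12 2 h]
  have u2 : val (vE ε 2) (X 2) ≤ 10 := by
    refine (val_le_val_of_subset (hv 2) (sub 2 {0, 1, 3, 5} ?_)).trans ?_
    · intro k; fin_cases k <;> simp [*]
    · simp [_root_.val, vE]
  -- agent 3 tolerates `g₅` and `g₇` together only in a bundle of size two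
  have pair : ∀ j, 4 ∈ X j → 6 ∈ X j → X j ⊆ {4, 6} := by
    intro j h4 h6 k hk
    by_contra hn
    have h := (efx.val_le_of_subset hv (i := 2) hk (T := {4, 6})
      (by simp [Finset.insert_subset_iff, h4, h6]) hn).trans u2
    simp [_root_.val, vE] at h
    linarith
  have h6 : (6 : Fin 7) ∈ X 0 ∨ (6 : Fin 7) ∈ X 1 := by
    rcases hcov 6 with h | h | h
    exacts [.inl h, .inr h, absurd h m6]
  rcases h₃₅ with ⟨h2, h4⟩ | ⟨h2, h4⟩
  · have n2 := d01 2 h2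
    have n4 : (4 : Fin 7) ∉ X 0 := fun h => d01 4 h h4
    rcases h6 with h6 | h6
    · have n6 := d01 6 h6
      by_cases h0 : (0 : Fin 7) ∈ X 1
      · have n0' : (0 : Fin 7) ∉ X 0 := fun h => d01 0 h h0
        by_cases h3 : (3 : Fin 7) ∈ X 1
        · have n3 : (3 : Fin 7) ∉ X 0 := fun h => d01 3 h h3
          have h := (efx.val_le_of_subset hv (i := 0) (j := 1) (g := 3) (by assumption)
            (T := {0, 4}) (by simp [Finset.insert_subset_iff, *]) (by decide)).trans
            (val_le_val_of_subset (hv 0) (sub 0 {1, 2, 6} (by intro k; fin_cases k <;> simp [*])))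
          simp [_root_.val, vE] at h
          linarith
        · by_cases h3' : (3 : Fin 7) ∈ X 0
          · by_cases h1 : (1 : Fin 7) ∈ X 0
            · have h := (efx.val_le_of_subset hv (i := 1) (j := 0) (g := 1) (by assumption)
                (T := {2, 3, 6}) (by simp [Finset.insert_subset_iff, *]) (by decide)).trans
                (val_le_val_of_subset (hv 1)
                  (sub 1 {0, 1, 4} (by intro k; fin_cases k <;> simp [*])))
              simp [_root_.val, vE] at h
              linarith
            · refine prod_lt_of_subset h₀ h₁
                (sub 0 {2, 3, 6} (by intro k; fin_cases k <;> simp [*]))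
                (sub 1 {0, 1, 4} (by intro k; fin_cases k <;> simp [*])) u2 ?_
              simp [_root_.val, vE]
              linarith
          · refine prod_lt_of_subset h₀ h₁
              (sub 0 {1, 2, 6} (by intro k; fin_cases k <;> simp [*]))
              (sub 1 {0, 1, 4} (by intro k; fin_cases k <;> simp [*])) u2 ?_
            simp [_root_.val, vE]
            linarith
      · refine prod_lt_of_subset h₀ h₁
          (sub 0 {0, 1, 2, 3, 6} (by intro k; fin_cases k <;> simp [*]))
          (sub 1 {1, 3, 4} (by intro k; fin_cases k <;> simp [*])) u2 ?_
        simp [_root_.val, vE]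
        linarith
    · have n6 : (6 : Fin 7) ∉ X 0 := fun h => d01 6 h h6
      have p := pair 1 h4 h6
      refine prod_lt_of_subset h₀ h₁
        (sub 0 {0, 1, 2, 3} (by intro k; fin_cases k <;> simp [*])) p u2 ?_
      simp [_root_.val, vE]
      linarith
  · have n2 : (2 : Fin 7) ∉ X 0 := fun h => d01 2 h h2
    have n4 := d01 4 h4
    rcases h6 with h6 | h6
    · have p := pair 0 h4 h6
      have only : ∀ k, k ≠ 5 → k ∉ X 2 := by
        intro k hk5 hk
        have h := (efx.val_le_of_subset hv (i := 0) hk (T := {5}) (by simpa using m5)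
          (by simpa using hk5)).trans (val_le_val_of_subset (hv 0) p)
        simp [_root_.val, vE] at h
        linarith
      have all : ∀ k, k ∉ ({4, 5, 6} : Finset (Fin 7)) → k ∈ X 1 := by
        intro k hk
        simp only [Finset.mem_insert, Finset.mem_singleton, not_or] at hk
        rcases hcov k with h | h | h
        · have := p h
          simp [hk] at this
        · exact h
        · exact absurd h (only k hk.2.1)
      have h := (efx.val_le_of_subset hv (i := 0) (all 1 (by decide)) (T := {0, 2, 3})
        (fun k hk => all k (by revert k; decide)) (by decide)).trans
        (val_le_val_of_subset (hv 0) p)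
      simp [_root_.val, vE] at h
      linarith
    · have n6 : (6 : Fin 7) ∉ X 0 := fun h => d01 6 h h6
      by_cases h0 : (0 : Fin 7) ∈ X 1
      · have n0' : (0 : Fin 7) ∉ X 0 := fun h => d01 0 h h0
        have h := (efx.val_le_of_subset hv (i := 0) (j := 1) (g := 6) (by assumption)
          (T := {0, 2}) (by simp [Finset.insert_subset_iff, *]) (by decide)).trans
          (val_le_val_of_subset (hv 0) (sub 0 {1, 3, 4} (by intro k; fin_cases k <;> simp [*])))
        simp [_root_.val, vE] at h
        linarith
      · by_cases h3 : (3 : Fin 7) ∈ X 0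
        · have n3 := d01 3 h3
          refine prod_lt_of_subset h₀ h₁
            (sub 0 {0, 1, 3, 4} (by intro k; fin_cases k <;> simp [*]))
            (sub 1 {1, 2, 6} (by intro k; fin_cases k <;> simp [*])) u2 ?_
          simp [_root_.val, vE]
          linarith
        · refine prod_lt_of_subset h₀ h₁
            (sub 0 {0, 1, 4} (by intro k; fin_cases k <;> simp [*]))
            (sub 1 {1, 2, 3, 6} (by intro k; fin_cases k <;> simp [*])) u2 ?_
          simp [_root_.val, vE]
          linarith
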